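/- For every odd integer n ≥ 3 there exists a 2×4 integer matrix X with X·Xᵀ = G_n, where G_n = diag(n + 2, n − 2); equivalently, there exist integers y₁, …, y₈ satisfying y₃² + y₄² + y₅² + y₆² = n − 2, y₁² + y₂² + y₇² + y₈² = n + 2, and y₁y₅ + y₂y₆ − y₃y₇ − y₄y₈ = 0. -/

import Mathlib

open Matrix

def PD {ι : Type} [Fintype ι] (G : Matrix ι ι ℤ) : Prop :=
  G.IsSymm ∧ ∀ x : ι → ℤ, x ≠ 0 → 0 < x ⬝ᵥ (G *ᵥ x)

theorem quad_congr {ι : Type} [Fintype ι] (G U : Matrix ι ι ℤ) (x : ι → ℤ) :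
    x ⬝ᵥ ((Uᵀ * G * U) *ᵥ x) = (U *ᵥ x) ⬝ᵥ (G *ᵥ (U *ᵥ x)) := by
  rw [← mulVec_mulVec, ← mulVec_mulVec, dotProduct_mulVec, vecMul_transpose]

theorem quad_single {ι : Type} [Fintype ι] [DecidableEq ι] (G : Matrix ι ι ℤ) (i : ι) :
    G i i = (Pi.single i 1 : ι → ℤ) ⬝ᵥ (G *ᵥ Pi.single i 1) := by
  simp

theorem PD.diag_pos {ι : Type} [Fintype ι] [DecidableEq ι] {G : Matrix ι ι ℤ} (hG : PD G)
    (i : ι) : 0 < G i i := by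
  have h := hG.2 (Pi.single i 1) (by simp)
  rwa [← quad_single G i] at h

theorem PD.congr {ι : Type} [Fintype ι] [DecidableEq ι] {G U : Matrix ι ι ℤ} (hG : PD G)
    (hU : U.det * U.det = 1) : PD (Uᵀ * G * U) := by
  refine ⟨?_, ?_⟩
  · unfold Matrix.IsSymm
    rw [transpose_mul, transpose_mul, transpose_transpose, hG.1.eq, Matrix.mul_assoc]
  · intro x hx
    rw [quad_congr]
    apply hG.2
    intro h
    apply hx
    apply eq_zero_of_mulVec_eq_zero _ h
    intro h0
    rw [h0] at hU
    simp at hU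

theorem det_congr {ι : Type} [Fintype ι] [DecidableEq ι] {G U : Matrix ι ι ℤ}
    (hU : U.det * U.det = 1) : (Uᵀ * G * U).det = G.det := by
  rw [det_mul, det_mul, det_transpose]
  linear_combination G.det * hU

/-- Block form of a symmetric matrix. -/
theorem exists_block {ι : Type} [Fintype ι] {G : Matrix (Unit ⊕ ι) (Unit ⊕ ι) ℤ}
    (hG : G.IsSymm) : ∃ (b : Matrix Unit ι ℤ) (D : Matrix ι ι ℤ), D.IsSymm ∧
      G = fromBlocks (of fun _ _ => G (Sum.inl ()) (Sum.inl ())) b bᵀ D := by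
  refine ⟨G.toBlocks₁₂, G.toBlocks₂₂, ?_, ?_⟩
  · ext i j
    exact hG.apply _ _
  · ext i j
    rcases i with i | i <;> rcases j with j | j
    · rfl
    · rfl
    · exact (hG.apply _ _).symm
    · rfl

theorem quad_block {ι : Type} [Fintype ι] (a : ℤ) (b : Matrix Unit ι ℤ) (D : Matrix ι ι ℤ)
    (t : ℤ) (s : ι → ℤ) :
    a * (Sum.elim (fun _ => t) s ⬝ᵥ
      (fromBlocks (of fun _ _ => a) b bᵀ D *ᵥ Sum.elim (fun _ => t) s)) =
      (a * t + (b *ᵥ s) ()) ^ 2 + s ⬝ᵥ ((a • D - bᵀ * b) *ᵥ s) := by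
  have h1 : s ⬝ᵥ (bᵀ *ᵥ fun _ => t) = t * (b *ᵥ s) () := by
    simp [dotProduct, mulVec, Finset.mul_sum]
    exact Finset.sum_congr rfl fun i _ => by ring
  have h2 : s ⬝ᵥ ((bᵀ * b) *ᵥ s) = (b *ᵥ s) () ^ 2 := by
    rw [← mulVec_mulVec, dotProduct_mulVec, vecMul_transpose]
    simp [dotProduct, pow_two]
  rw [fromBlocks_mulVec, sub_mulVec, dotProduct_sub, h2, smul_mulVec, dotProduct_smul]
  simp only [Sum.elim_comp_inl, Sum.elim_comp_inr, sumElim_dotProduct_sumElim, dotProduct_add, h1]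
  simp [dotProduct, mulVec]
  ring

theorem PD.schur {ι : Type} [Fintype ι] {a : ℤ} {b : Matrix Unit ι ℤ} {D : Matrix ι ι ℤ}
    (hD : D.IsSymm) (ha : 0 < a) (h : PD (fromBlocks (of fun _ _ => a) b bᵀ D)) :
    PD (a • D - bᵀ * b) := by
  refine ⟨?_, ?_⟩
  · unfold Matrix.IsSymm
    rw [transpose_sub, transpose_smul, hD.eq, transpose_mul, transpose_transpose]
  · intro s hs
    have hq := quad_block a b D (-((b *ᵥ s) ())) (a • s)
    rw [mulVec_smul, mulVec_smul, smul_dotProduct, dotProduct_smul] at hq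
    have hne : Sum.elim (fun _ : Unit => -((b *ᵥ s) ())) (a • s) ≠ 0 := by
      intro h0
      apply hs
      funext i
      have := congrFun h0 (Sum.inr i)
      simp at this
      rcases this with h | h
      · omega
      · exact h
    have hpos := mul_pos ha (h.2 _ hne)
    rw [hq] at hpos
    simp only [Pi.smul_apply, smul_eq_mul] at hpos
    have h2 : 0 < a * a * (s ⬝ᵥ ((a • D - bᵀ * b) *ᵥ s)) := by linarith
    exact pos_of_mul_pos_right h2 (by positivity)

theorem det_schur {ι : Type} [Fintype ι] [DecidableEq ι] (a : ℤ) (b : Matrix Unit ι ℤ)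
    (D : Matrix ι ι ℤ) :
    a * (a • D - bᵀ * b).det =
      a ^ Fintype.card ι * (fromBlocks (of fun _ _ => a) b bᵀ D).det := by
  have h : fromBlocks (1 : Matrix Unit Unit ℤ) 0 (-bᵀ) (a • (1 : Matrix ι ι ℤ)) *
      fromBlocks (of fun _ _ => a) b bᵀ D =
      fromBlocks (of fun _ _ => a) b 0 (a • D - bᵀ * b) := by
    rw [fromBlocks_multiply]
    congr 1
    · simp
    · simp
    · rw [Matrix.smul_mul, Matrix.one_mul]
      ext i j
      simp [Matrix.mul_apply]
      ring
    · rw [Matrix.smul_mul, Matrix.one_mul, Matrix.neg_mul]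
      abel
  have h' := congrArg Matrix.det h
  rw [det_mul, det_fromBlocks_zero₁₂, det_fromBlocks_zero₂₁, det_smul] at h'
  rw [det_one, det_one, det_unique (of fun _ _ : Unit => a)] at h'
  simp only [of_apply] at h'
  linarith

theorem exists_round (a β : ℤ) (ha : 0 < a) : ∃ t : ℤ, 4 * (a * t + β) ^ 2 ≤ a ^ 2 := by
  have h1 := Int.emod_add_mul_ediv β a
  have h2 := Int.emod_nonneg β ha.ne'
  have h3 := Int.emod_lt_of_pos β ha
  rcases le_total (2 * (β % a)) a with h | h
  · refine ⟨-(β / a), ?_⟩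
    have : a * -(β / a) + β = β % a := by linarith
    rw [this]; nlinarith
  · refine ⟨-(β / a) - 1, ?_⟩
    have : a * (-(β / a) - 1) + β = β % a - a := by linarith
    rw [this]; nlinarith

def Herm (ι : Type) [Fintype ι] [DecidableEq ι] (i₀ : ι) (e : ℕ) : Prop :=
  ∀ G : Matrix ι ι ℤ, PD G → ∃ U : Matrix ι ι ℤ, U.det * U.det = 1 ∧
    (Uᵀ * G * U) i₀ i₀ ^ Fintype.card ι * 3 ^ e ≤ 4 ^ e * G.det

theorem exists_min {ι : Type} [Fintype ι] [DecidableEq ι] (i₀ : ι) (G : Matrix ι ι ℤ)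
    (hG : PD G) : ∃ U : Matrix ι ι ℤ, U.det * U.det = 1 ∧
      ∀ V : Matrix ι ι ℤ, V.det * V.det = 1 →
        (Uᵀ * G * U) i₀ i₀ ≤ (Vᵀ * (Uᵀ * G * U) * V) i₀ i₀ := by
  have hpos : ∀ V : Matrix ι ι ℤ, V.det * V.det = 1 → 0 < (Vᵀ * G * V) i₀ i₀ := fun V hV => (hG.congr hV).diag_pos i₀
  obtain ⟨U, hU, hmin⟩ := WellFounded.has_min
    (measure fun U : Matrix ι ι ℤ => ((Uᵀ * G * U) i₀ i₀).toNat).wf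
    {U | U.det * U.det = 1} ⟨1, by simp⟩
  refine ⟨U, hU, fun V hV => ?_⟩
  have hUV : (U * V).det * (U * V).det = 1 := by
    rw [det_mul]
    have hU' : U.det * U.det = 1 := hU
    linear_combination V.det * V.det * hU' + hV
  have h1 := hmin (U * V) hUV
  have h2 : (U * V)ᵀ * G * (U * V) = Vᵀ * (Uᵀ * G * U) * V := by
    simp only [transpose_mul, Matrix.mul_assoc]
  change ¬ (((U * V)ᵀ * G * (U * V)) i₀ i₀).toNat < ((Uᵀ * G * U) i₀ i₀).toNat at h1
  have h3 := hpos _ hUV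
  have h4 := hpos _ hU
  rw [h2] at h1 h3
  omega

theorem Herm.step {ι : Type} [Fintype ι] [DecidableEq ι] (i₀ : ι) (e : ℕ) (h : Herm ι i₀ e) :
    Herm (Unit ⊕ ι) (Sum.inl ()) (e + Fintype.card ι) := by
  intro G₀ hG₀
  obtain ⟨U, hU, hmin⟩ := exists_min (Sum.inl ()) G₀ hG₀
  refine ⟨U, hU, ?_⟩
  rw [← det_congr (G := G₀) hU]
  have hG := hG₀.congr hU
  generalize Uᵀ * G₀ * U = G at hmin hG
  clear hG₀ hU U G₀
  have ha : 0 < G (Sum.inl ()) (Sum.inl ()) := hG.diag_pos _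
  obtain ⟨b, D, hD, hGe⟩ := exists_block hG.1
  generalize G (Sum.inl ()) (Sum.inl ()) = a at *
  subst hGe
  obtain ⟨W, hW, hWb⟩ := h _ (hG.schur hD ha)
  have hdet := det_schur a b D
  have hHpos : 0 < (Wᵀ * (a • D - bᵀ * b) * W) i₀ i₀ := ((hG.schur hD ha).congr hW).diag_pos _
  have hkey : 3 * a ^ 2 ≤ 4 * (Wᵀ * (a • D - bᵀ * b) * W) i₀ i₀ := by
    rw [quad_single (Wᵀ * (a • D - bᵀ * b) * W), quad_congr]
    set s := W *ᵥ (Pi.single i₀ 1) with hs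
    obtain ⟨t, ht⟩ := exists_round a ((b *ᵥ s) ()) ha
    have hq := quad_block a b D t s
    let V₀ : Matrix (Unit ⊕ ι) (Unit ⊕ ι) ℤ :=
      fromBlocks 1 (of fun _ j => if j = i₀ then t else 0) 0 W
    let V := V₀.submatrix id (Equiv.swap (Sum.inl ()) (Sum.inr i₀))
    have hV : V.det * V.det = 1 := by
      have : V.det = - W.det := by
        simp only [V]
        rw [det_permute']
        simp [V₀]
      rw [this]; linarith
    have hm := hmin V hV
    rw [quad_single (Vᵀ * _ * V), quad_congr] at hm
    have hcol : V *ᵥ Pi.single (Sum.inl ()) 1 = Sum.elim (fun _ => t) s := by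
      funext i
      rcases i with i | i <;> simp [V, V₀, hs]
    rw [hcol] at hm
    nlinarith
  generalize (Wᵀ * (a • D - bᵀ * b) * W) i₀ i₀ = q at *
  generalize (a • D - bᵀ * b).det = dH at *
  generalize (fromBlocks (of fun _ _ => a) b bᵀ D).det = d at *
  rw [Fintype.card_sum, Fintype.card_unit]
  have hk : 0 < Fintype.card ι := Fintype.card_pos_iff.mpr ⟨i₀⟩
  generalize Fintype.card ι = k at *
  obtain ⟨l, rfl⟩ : ∃ l, k = l + 1 := ⟨k - 1, by omega⟩
  have hdH : dH = a ^ l * d := by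
    apply mul_left_cancel₀ ha.ne'
    rw [hdet]; ring
  have hp : (3 * a ^ 2) ^ (l + 1) ≤ (4 * q) ^ (l + 1) := pow_le_pow_left₀ (by positivity) hkey _
  have hal : 0 < a ^ l := by positivity
  refine le_of_mul_le_mul_left ?_ hal
  calc a ^ l * (a ^ (1 + (l + 1)) * 3 ^ (e + (l + 1)))
      = (3 * a ^ 2) ^ (l + 1) * 3 ^ e := by rw [mul_pow, ← pow_mul]; ring
    _ ≤ (4 * q) ^ (l + 1) * 3 ^ e := by gcongr
    _ = 4 ^ (l + 1) * (q ^ (l + 1) * 3 ^ e) := by rw [mul_pow]; ring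
    _ ≤ 4 ^ (l + 1) * (4 ^ e * dH) := by gcongr
    _ = a ^ l * (4 ^ (e + (l + 1)) * d) := by rw [hdH]; ring

def Uni (ι : Type) [Fintype ι] [DecidableEq ι] : Prop :=
  ∀ G : Matrix ι ι ℤ, PD G → G.det = 1 → ∃ A : Matrix ι ι ℤ, Aᵀ * A = G

theorem Uni.step {ι : Type} [Fintype ι] [DecidableEq ι] (e : ℕ)
    (h : Herm (Unit ⊕ ι) (Sum.inl ()) e)
    (he : (4 : ℤ) ^ e < 2 ^ (Fintype.card ι + 1) * 3 ^ e) (hu : Uni ι) :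
    Uni (Unit ⊕ ι) := by
  intro G₀ hG₀ hd₀
  obtain ⟨U, hU, hb⟩ := h G₀ hG₀
  have hG := hG₀.congr hU
  have hd := (det_congr (G := G₀) hU).trans hd₀
  suffices hA : ∃ A, Aᵀ * A = Uᵀ * G₀ * U by
    obtain ⟨A, hA⟩ := hA
    have hun : IsUnit U.det := IsUnit.of_mul_eq_one _ hU
    refine ⟨A * U⁻¹, ?_⟩
    have h1 : U * U⁻¹ = 1 := mul_nonsing_inv _ hun
    have h2 : U⁻¹ᵀ * Uᵀ = 1 := by rw [← transpose_mul, h1, transpose_one]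
    calc (A * U⁻¹)ᵀ * (A * U⁻¹) = U⁻¹ᵀ * (Aᵀ * A) * U⁻¹ := by
          rw [transpose_mul]; simp only [Matrix.mul_assoc]
      _ = (U⁻¹ᵀ * Uᵀ) * G₀ * (U * U⁻¹) := by rw [hA]; simp only [Matrix.mul_assoc]
      _ = G₀ := by rw [h1, h2]; simp
  rw [hd₀] at hb
  generalize Uᵀ * G₀ * U = G at *
  have ha : 0 < G (Sum.inl ()) (Sum.inl ()) := hG.diag_pos _
  obtain ⟨b, D, hD, hGe⟩ := exists_block hG.1
  have ha1 : G (Sum.inl ()) (Sum.inl ()) = 1 := by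
    by_contra hne
    have h2 : 2 ≤ G (Sum.inl ()) (Sum.inl ()) := by omega
    have h3 : (2 : ℤ) ^ Fintype.card (Unit ⊕ ι) ≤
      G (Sum.inl ()) (Sum.inl ()) ^ Fintype.card (Unit ⊕ ι) := pow_le_pow_left₀ (by norm_num) h2 _
    rw [Fintype.card_sum, Fintype.card_unit, add_comm 1] at h3 hb
    have h4 := mul_le_mul_of_nonneg_right h3 (by positivity : (0 : ℤ) ≤ 3 ^ e)
    linarith
  rw [ha1] at hGe
  rw [hGe] at hG hd
  have hdet := det_schur 1 b D
  rw [hd] at hdet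
  obtain ⟨A, hA⟩ := hu _ (hG.schur hD one_pos) (by simpa using hdet)
  refine ⟨fromBlocks 1 b 0 A, ?_⟩
  rw [hGe, fromBlocks_transpose, fromBlocks_multiply, hA]
  congr 1
  · ext; simp
  · simp
  · simp
  · simp

theorem herm_unit : Herm Unit () 0 := by
  intro G _
  refine ⟨1, by simp, ?_⟩
  simp [det_unique]

theorem uni_unit : Uni Unit := by
  intro G _ hd
  refine ⟨1, ?_⟩
  ext
  simp [det_unique] at hd ⊢
  exact hd.symm

theorem uni_four : Uni (Unit ⊕ (Unit ⊕ (Unit ⊕ Unit))) := by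
  have h2 := Herm.step _ _ herm_unit
  have h3 := Herm.step _ _ h2
  have h4 := Herm.step _ _ h3
  refine Uni.step _ h4 (by simp) (Uni.step _ h3 (by simp) (Uni.step _ h2 (by simp) uni_unit))
open scoped NumberTheorySymbols

theorem arith_aux (m : ℕ) (hm : m % 8 = 5) :
    ∃ a b c : ℤ, 0 < a ∧ 0 < b ∧ a + b + c ^ 2 = a * b * m := by
  obtain ⟨k, hk⟩ : ∃ k, m = 8 * k + 5 := ⟨m / 8, by omega⟩
  have hcop : (12 * k + 7).Coprime (4 * m) := by
    have h1 : (12 * k + 7).Coprime 4 := by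
      have : (12 * k + 7) = 7 + 4 * (3 * k) := by ring
      rw [this, Nat.coprime_add_mul_left_left]; decide
    have h2 : (12 * k + 7).Coprime m := by
      have h3 : IsCoprime ((12 * k + 7 : ℕ) : ℤ) (m : ℤ) :=
        ⟨-2, 3, by rw [hk]; push_cast; ring⟩
      exact Nat.isCoprime_iff_coprime.mp h3
    exact Nat.Coprime.mul_right h1 h2
  obtain ⟨p, hgt, hp, hmod⟩ := Nat.forall_exists_prime_gt_and_modEq (12 * k + 7)
    (by omega : 4 * m ≠ 0) hcop
  obtain ⟨j, hj⟩ : ∃ j, p = 4 * m * j + (12 * k + 7) := by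
    have := (Nat.modEq_iff_dvd' hgt.le).mp hmod.symm
    obtain ⟨j, hj⟩ := this
    exact ⟨j, by omega⟩
  set b : ℕ := 8 * j + 3 with hb
  have hbm : 2 * (p : ℤ) = b * m - 1 := by
    rw [hj, hb, hk]; push_cast; ring
  have : Fact p.Prime := ⟨hp⟩
  have hp4 : p % 4 = 3 := by
    have : p = 4 * (m * j + 3 * k + 1) + 3 := by rw [hj]; ring
    omega
  have hb4 : b % 4 = 3 := by omega
  have hbodd : Odd b := Nat.odd_iff.mpr (by omega)
  have hpodd : Odd p := Nat.odd_iff.mpr (by omega)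
  have hJ2 : J(-2 | b) = 1 := by
    rw [jacobiSym.at_neg_two hbodd, ZMod.χ₈'_nat_eq_if_mod_eight]
    have h1 : b % 8 = 3 := by omega
    have h2 : b % 2 = 1 := by omega
    simp [h1, h2]
  have hJp : J(p | b) = 1 := by
    have h1 : J(-2 * p | b) = J(1 | b) := by
      apply jacobiSym.mod_left'
      have : (-2 * p : ℤ) = 1 + b * (-m) := by linarith
      rw [this, Int.add_mul_emod_self_left]
    rw [jacobiSym.mul_left, hJ2, one_mul, jacobiSym.one_left] at h1
    exact h1
  have hJ : J(-b | p) = 1 := by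
    have h0 : (-b : ℤ) = -1 * b := by ring
    rw [h0, jacobiSym.mul_left, jacobiSym.quadratic_reciprocity_three_mod_four hb4 hp4, hJp,
      jacobiSym.at_neg_one hpodd, ZMod.χ₄_nat_three_mod_four hp4]
    norm_num
  obtain ⟨c0, hc0⟩ := ZMod.isSquare_of_jacobiSym_eq_one hJ
  have hdvd : ∀ c : ℤ, (c : ZMod p) = c0 → (p : ℤ) ∣ c ^ 2 + b := by
    intro c hc
    rw [← ZMod.intCast_zmod_eq_zero_iff_dvd _ p |>.symm.symm]
    push_cast at hc0 ⊢
    rw [hc, pow_two, ← hc0]; ring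
  obtain ⟨c, hc, hcodd⟩ : ∃ c : ℤ, (c : ZMod p) = c0 ∧ Odd c := by
    obtain ⟨c1, hc1⟩ := ZMod.intCast_surjective c0
    rcases Int.even_or_odd c1 with h | h
    · exact ⟨c1 + p, by simp [hc1], h.add_odd (by exact_mod_cast hpodd)⟩
    · exact ⟨c1, hc1, h⟩
  have h2 : (2 : ℤ) ∣ c ^ 2 + b := by
    have : Even (c ^ 2 + (b : ℤ)) := (hcodd.pow).add_odd (by exact_mod_cast hbodd)
    exact this.two_dvd
  have h2p : (2 * p : ℤ) ∣ c ^ 2 + b := by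
    apply IsCoprime.mul_dvd _ h2 (hdvd c hc)
    have : Nat.Coprime 2 p := Nat.coprime_two_left.mpr hpodd
    exact_mod_cast Nat.isCoprime_iff_coprime.mpr this
  obtain ⟨a, ha⟩ := h2p
  refine ⟨a, b, c, ?_, by omega, ?_⟩
  · have h1 : 0 < c ^ 2 + (b : ℤ) := by positivity
    rw [ha] at h1
    exact pos_of_mul_pos_right h1 (by positivity)
  · rw [hbm] at ha
    linarith

theorem uni_fin_four (M : Matrix (Fin 4) (Fin 4) ℤ) (hM : PD M) (hd : M.det = 1) :
    ∃ B : Matrix (Fin 4) (Fin 4) ℤ, Bᵀ * B = M := by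
  have e : (Unit ⊕ (Unit ⊕ (Unit ⊕ Unit))) ≃ Fin 4 := Fintype.equivFinOfCardEq (by simp)
  obtain ⟨A, hA⟩ := uni_four (M.submatrix e e) ⟨hM.1.submatrix e, fun x hx => by
    rw [submatrix_mulVec_equiv, ← comp_equiv_symm_dotProduct]
    apply hM.2
    intro h
    apply hx
    funext i
    simpa using congrFun h (e i)⟩ (by rw [det_submatrix_equiv_self, hd])
  refine ⟨A.submatrix e.symm e.symm, ?_⟩
  rw [transpose_submatrix, submatrix_mul_equiv, hA]
  simp

theorem key (u w a b c : ℤ) (hu : 0 < u) (hw : 0 < w) (ha : 0 < a) (hb : 0 < b)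
    (h : a + b + c ^ 2 = a * b * (u * w)) :
    ∃ B : Matrix (Fin 4) (Fin 4) ℤ,
      Bᵀ * B = !![u, 0, 1, 0; 0, w, 0, 1; 1, 0, w * a, c; 0, 1, c, u * b] := by
  apply uni_fin_four
  · refine ⟨?_, ?_⟩
    · ext i j
      fin_cases i <;> fin_cases j <;> rfl
    · intro x hx
      have hq : x ⬝ᵥ (!![u, 0, 1, 0; 0, w, 0, 1; 1, 0, w * a, c; 0, 1, c, u * b] *ᵥ x) =
          u * x 0 ^ 2 + w * x 1 ^ 2 + 2 * x 0 * x 2 + 2 * x 1 * x 3 + w * a * x 2 ^ 2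
            + u * b * x 3 ^ 2 + 2 * c * x 2 * x 3 := by
        simp [dotProduct, mulVec, Fin.sum_univ_four]
        ring
      rw [hq]
      have hne : ¬ (x 0 = 0 ∧ x 1 = 0 ∧ x 2 = 0 ∧ x 3 = 0) := by
        rintro ⟨h0, h1, h2, h3⟩
        apply hx
        funext i
        fin_cases i <;> assumption
      generalize x 0 = x0 at *
      generalize x 1 = x1 at *
      generalize x 2 = x2 at *
      generalize x 3 = x3 at *
      have hm : 0 < u * w := by positivity
      have hP : 0 < a * (u * w) - 1 := by
        by_contra hcon
        have : a * (u * w) ≤ 1 := by linarith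
        nlinarith [sq_nonneg c]
      set P := a * (u * w) - 1 with hPdef
      set Q := u * x0 ^ 2 + w * x1 ^ 2 + 2 * x0 * x2 + 2 * x1 * x3 + w * a * x2 ^ 2
            + u * b * x3 ^ 2 + 2 * c * x2 * x3 with hQ
      have hid : (u * w) * (w * P) * Q = (w * P) * (w * (u * x0 + x2) ^ 2 + u * (w * x1 + x3) ^ 2)
          + ((w * P * x2 + c * (u * w) * x3) ^ 2 + (u * w) * x3 ^ 2) := by
        rw [hQ, hPdef]
        linear_combination (-(u * w ^ 2 * u) * x3 ^ 2) * h
      have hpos : 0 < (w * P) * (w * (u * x0 + x2) ^ 2 + u * (w * x1 + x3) ^ 2)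
          + ((w * P * x2 + c * (u * w) * x3) ^ 2 + (u * w) * x3 ^ 2) := by
        by_cases h3 : x3 = 0
        · by_cases h2 : x2 = 0
          · subst h3 h2
            by_cases h1 : x1 = 0
            · have h0 : x0 ≠ 0 := fun h0 => hne ⟨h0, h1, rfl, rfl⟩
              subst h1
              simp only [add_zero, mul_zero]
              positivity
            · simp only [add_zero, mul_zero]
              positivity
          · subst h3
            simp only [add_zero, mul_zero]
            positivity
        · positivity
      rw [← hid] at hpos
      exact pos_of_mul_pos_right hpos (by positivity)
  · simp [det_succ_row_zero, Fin.sum_univ_succ, Fin.succAbove]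
    linear_combination (-(u * w)) * h

theorem rep_aux (n : ℤ) (hodd : Odd n) (hn : 3 ≤ n) :
    ∃ p q : Fin 4 → ℤ, p ⬝ᵥ p = n + 2 ∧ q ⬝ᵥ q = n - 2 ∧ p ⬝ᵥ q = 0 := by
  obtain ⟨k, rfl⟩ := hodd
  have hm0 : 0 ≤ (2 * k + 1 + 2) * (2 * k + 1 - 2) := mul_nonneg (by omega) (by omega)
  obtain ⟨m, hm⟩ := Int.eq_ofNat_of_zero_le hm0
  have hm8 : m % 8 = 5 := by
    obtain ⟨r, hr⟩ := Int.even_mul_succ_self k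
    have : (m : ℤ) = 8 * r - 3 := by rw [← hm]; linear_combination 4 * hr
    omega
  obtain ⟨a, b, c, ha, hb, habc⟩ := arith_aux m hm8
  rw [← hm] at habc
  obtain ⟨B, hB⟩ := key _ _ a b c (by omega) (by omega) ha hb habc
  refine ⟨fun i => B i 0, fun i => B i 1, ?_, ?_, ?_⟩
  · exact congrFun (congrFun hB 0) 0
  · exact congrFun (congrFun hB 1) 1
  · exact congrFun (congrFun hB 0) 1

/-- For every odd integer `n ≥ 3` there is a `2 × 4` integer matrix `X` with
`X Xᵀ = Gₙ = diag(n+2, n−2)`; equivalently, there are integers `y₁, …, y₈` with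
`y₃² + y₄² + y₅² + y₆² = n − 2`, `y₁² + y₂² + y₇² + y₈² = n + 2` and
`y₁y₅ + y₂y₆ − y₃y₇ − y₄y₈ = 0`. -/
theorem global_representation (n : ℤ) (hodd : Odd n) (hn : 3 ≤ n) :
    (∃ X : Matrix (Fin 2) (Fin 4) ℤ, X * Xᵀ = !![n + 2, 0; 0, n - 2])
      ∧
    (∃ y₁ y₂ y₃ y₄ y₅ y₆ y₇ y₈ : ℤ,
        y₃ ^ 2 + y₄ ^ 2 + y₅ ^ 2 + y₆ ^ 2 = n - 2 ∧
        y₁ ^ 2 + y₂ ^ 2 + y₇ ^ 2 + y₈ ^ 2 = n + 2 ∧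
        y₁ * y₅ + y₂ * y₆ - y₃ * y₇ - y₄ * y₈ = 0) := by
  obtain ⟨p, q, hp, hq, hpq⟩ := rep_aux n hodd hn
  have hqp : q ⬝ᵥ p = 0 := by rw [dotProduct_comm, hpq]
  refine ⟨⟨of ![p, q], ?_⟩, ?_⟩
  · ext i j
    fin_cases i <;> fin_cases j
    · exact hp
    · exact hpq
    · exact hqp
    · exact hq
  · refine ⟨p 0, p 1, -q 2, -q 3, q 0, q 1, p 2, p 3, ?_, ?_, ?_⟩
    · rw [← hq]; simp [dotProduct, Fin.sum_univ_four]; ring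
    · rw [← hp]; simp [dotProduct, Fin.sum_univ_four]; ring
    · rw [← hpq]; simp [dotProduct, Fin.sum_univ_four]; ring
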